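/- Let z = (z₁,z₂) ∈ [0,1)², C_z = [z₁,1) × [z₂,1), and let j ∈ ℕ₀², m ∈ 𝔻_j be such that z ∈ I_{j,m}. Then μ_{j,m}^z := ∫_{[0,1)²} χ_{C_z}(x)·h_{j,m}(x) dx equals: (z₁ − m₁/2^{j₁})(z₂ − m₂/2^{j₂}) if z lies in the left-lower quarter I_{j,m}^{+,+}; (z₁ − m₁/2^{j₁})((m₂+1)/2^{j₂} − z₂) if z lies in the left-upper quarter I_{j,m}^{+,−}; ((m₁+1)/2^{j₁} − z₁)(z₂ − m₂/2^{j₂}) if z lies in the right-lower quarter I_{j,m}^{−,+}; and ((m₁+1)/2^{j₁} − z₁)((m₂+1)/2^{j₂} − z₂) if z lies in the right-upper quarter I_{j,m}^{−,−}. -/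

import Mathlib

open MeasureTheory

noncomputable section

/-- The half-open unit square `[0,1) × [0,1)` in `ℝ × ℝ`. -/
def unitSq : Set (ℝ × ℝ) := Set.Ico (0:ℝ) 1 ×ˢ Set.Ico (0:ℝ) 1

/-- The dyadic interval `I_{j,m}`. -/
def dyadic (j m : ℕ × ℕ) : Set (ℝ × ℝ) :=
  Set.Ico ((m.1:ℝ)/2^j.1) (((m.1:ℝ)+1)/2^j.1) ×ˢ
    Set.Ico ((m.2:ℝ)/2^j.2) (((m.2:ℝ)+1)/2^j.2)

/-- The one-dimensional Haar function adapted to `[m/2^j, (m+1)/2^j)`. -/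
def haar1 (j m : ℕ) (t : ℝ) : ℝ :=
  if (m:ℝ)/2^j ≤ t ∧ t < (2*(m:ℝ)+1)/2^(j+1) then 1
  else if (2*(m:ℝ)+1)/2^(j+1) ≤ t ∧ t < ((m:ℝ)+1)/2^j then -1
  else 0

/-- The two-dimensional Haar function `h_{j,m}`. -/
def haar (j m : ℕ × ℕ) (x : ℝ × ℝ) : ℝ := haar1 j.1 m.1 x.1 * haar1 j.2 m.2 x.2

/-- The characteristic function of `C_z = [z₁,1) × [z₂,1)`. -/
def chiC (z x : ℝ × ℝ) : ℝ :=
  if z.1 ≤ x.1 ∧ x.1 < 1 ∧ z.2 ≤ x.2 ∧ x.2 < 1 then 1 else 0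

/-- The one-dimensional integral as a difference of two lengths. -/
lemma haar1_aux (z : ℝ) (hz0 : 0 ≤ z) (j m : ℕ) (hm : m < 2 ^ j)
    (hz : (m:ℝ)/2^j ≤ z) (hz' : z < ((m:ℝ)+1)/2^j) :
    ∫ t in Set.Ico (0:ℝ) 1, (if z ≤ t ∧ t < 1 then (1:ℝ) else 0) * haar1 j m t
      = if z < (2*(m:ℝ)+1)/2^(j+1) then -(z - (m:ℝ)/2^j) else -(((m:ℝ)+1)/2^j - z) := by
  have hp : (0:ℝ) < 2^j := by positivity
  have hb : ((m:ℝ)+1)/2^j ≤ 1 := by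
    rw [div_le_one hp]
    exact_mod_cast hm
  have hmid : (2*(m:ℝ)+1)/2^(j+1) = ((m:ℝ)/2^j + ((m:ℝ)+1)/2^j)/2 := by
    rw [pow_succ]; field_simp; ring
  have hab : (m:ℝ)/2^j < ((m:ℝ)+1)/2^j := by
    apply div_lt_div_of_pos_right _ hp; linarith
  unfold haar1
  rw [hmid]
  generalize (m:ℝ)/2^j = a at *
  generalize ((m:ℝ)+1)/2^j = b at *
  have key : ∀ t : ℝ, (Set.Ico (0:ℝ) 1).indicator (fun t => (if z ≤ t ∧ t < 1 then (1:ℝ) else 0) *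
      (if a ≤ t ∧ t < (a+b)/2 then 1 else if (a+b)/2 ≤ t ∧ t < b then -1 else 0)) t
      = (Set.Ico z ((a+b)/2)).indicator (fun _ => (1:ℝ)) t
        - (Set.Ico (max z ((a+b)/2)) b).indicator (fun _ => (1:ℝ)) t := by
    intro t
    simp only [Set.indicator_apply, Set.mem_Ico, max_le_iff]
    split_ifs <;> grind
  rw [← integral_indicator measurableSet_Ico, integral_congr_ae (Filter.Eventually.of_forall key),
    integral_sub, integral_indicator measurableSet_Ico, integral_indicator measurableSet_Ico]
  · simp only [setIntegral_const, smul_eq_mul, mul_one, measureReal_def, Real.volume_Ico]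
    split_ifs with h
    · rw [max_eq_right h.le, ENNReal.toReal_ofReal (by linarith),
        ENNReal.toReal_ofReal (by linarith)]
      ring
    · push Not at h
      rw [max_eq_left h, ENNReal.ofReal_of_nonpos (by linarith),
        ENNReal.toReal_ofReal (by linarith)]
      simp
  · exact (integrable_indicator_iff measurableSet_Ico).2 (integrableOn_const (by simp))
  · exact (integrable_indicator_iff measurableSet_Ico).2 (integrableOn_const (by simp))

/-- For `z ∈ I_{j,m}`, the value of `μ_{j,m}^z = ∫_{[0,1)²} χ_{C_z}·h_{j,m}` depending
on which quarter of `I_{j,m}` contains `z` (the quarters being obtained by halving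
`I_{j,m}` in both coordinates). -/
theorem integral_chiC_haar_of_mem (z : ℝ × ℝ) (hz : z ∈ unitSq)
    (j m : ℕ × ℕ) (hm1 : m.1 < 2 ^ j.1) (hm2 : m.2 < 2 ^ j.2)
    (hzm : z ∈ dyadic j m) :
    (z.1 < (2*(m.1:ℝ)+1)/2^(j.1+1) → z.2 < (2*(m.2:ℝ)+1)/2^(j.2+1) →
      ∫ x in unitSq, chiC z x * haar j m x
        = (z.1 - (m.1:ℝ)/2^j.1) * (z.2 - (m.2:ℝ)/2^j.2)) ∧
    (z.1 < (2*(m.1:ℝ)+1)/2^(j.1+1) → (2*(m.2:ℝ)+1)/2^(j.2+1) ≤ z.2 →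
      ∫ x in unitSq, chiC z x * haar j m x
        = (z.1 - (m.1:ℝ)/2^j.1) * (((m.2:ℝ)+1)/2^j.2 - z.2)) ∧
    ((2*(m.1:ℝ)+1)/2^(j.1+1) ≤ z.1 → z.2 < (2*(m.2:ℝ)+1)/2^(j.2+1) →
      ∫ x in unitSq, chiC z x * haar j m x
        = (((m.1:ℝ)+1)/2^j.1 - z.1) * (z.2 - (m.2:ℝ)/2^j.2)) ∧
    ((2*(m.1:ℝ)+1)/2^(j.1+1) ≤ z.1 → (2*(m.2:ℝ)+1)/2^(j.2+1) ≤ z.2 →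
      ∫ x in unitSq, chiC z x * haar j m x
        = (((m.1:ℝ)+1)/2^j.1 - z.1) * (((m.2:ℝ)+1)/2^j.2 - z.2)) := by
  have main : ∫ x in unitSq, chiC z x * haar j m x
      = (∫ t in Set.Ico (0:ℝ) 1, (if z.1 ≤ t ∧ t < 1 then (1:ℝ) else 0) * haar1 j.1 m.1 t) *
        (∫ t in Set.Ico (0:ℝ) 1, (if z.2 ≤ t ∧ t < 1 then (1:ℝ) else 0) * haar1 j.2 m.2 t) := by
    rw [← setIntegral_prod_mul, ← Measure.volume_eq_prod]
    unfold unitSq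
    congr 1
    funext x
    unfold chiC haar
    split_ifs <;> first | (exfalso; tauto) | ring
  obtain ⟨⟨h1, -⟩, ⟨h2, -⟩⟩ := hz
  obtain ⟨⟨h3, h4⟩, ⟨h5, h6⟩⟩ := hzm
  rw [main, haar1_aux z.1 h1 j.1 m.1 hm1 h3 h4, haar1_aux z.2 h2 j.2 m.2 hm2 h5 h6]
  refine ⟨fun h h' => ?_, fun h h' => ?_, fun h h' => ?_, fun h h' => ?_⟩
  · rw [if_pos h, if_pos h']; ring
  · rw [if_pos h, if_neg (not_lt.2 h')]; ring
  · rw [if_neg (not_lt.2 h), if_pos h']; ring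
  · rw [if_neg (not_lt.2 h), if_neg (not_lt.2 h')]; ring

end
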